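/- arXiv:2003.11834 — 2 statements merged into one kernel-verified Lean document; each statement's English description precedes it below -/
import Mathlib

section
/- Let N ≥ 1 and p ∈ [1,∞]. There exists a constant C′_p > 0, depending only on p and N, such that for every φ ∈ L¹(ℝ^N) with ∫_{ℝ^N} |x||φ(x)| dx < ∞ and ∫_{ℝ^N} φ(x) dx = M, one has ‖G(·,t) * φ − M·G(·,t)‖_p ≤ C′_p · t^{−(N/2)(1−1/p)−1/2} · ∫_{ℝ^N} |x||φ(x)| dx for all t > 0. -/
open MeasureTheory Real Filter Topology
open scoped ENNReal

noncomputable section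

/-- `ℝ^N` as a Euclidean space. -/
abbrev Euc (N : ℕ) := EuclideanSpace ℝ (Fin N)

/-- The heat kernel `G(x,t) = (4πt)^{-N/2} exp(-|x|²/(4t))` on `ℝ^N`. -/
def heatKernel (N : ℕ) (x : Euc N) (t : ℝ) : ℝ :=
  (4 * π * t) ^ (-(N : ℝ) / 2) * Real.exp (-‖x‖ ^ 2 / (4 * t))

lemma hk_u (u : ℝ) : u * Real.exp (-u^2) ≤ Real.exp (-(u^2/2)) := by
  have h1 : u ≤ Real.exp (u^2/2) := by
    have := Real.add_one_le_exp (u^2/2)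
    nlinarith [sq_nonneg (u-1)]
  have h2 : Real.exp (-(u^2/2)) = Real.exp (u^2/2) * Real.exp (-u^2) := by
    rw [← Real.exp_add]; ring_nf
  rw [h2]
  gcongr

/-- dominating kernel -/
def hkK (N : ℕ) (t : ℝ) (z : Euc N) : ℝ :=
  ((4 * π * t) ^ (-(N : ℝ) / 2) * t ^ (-(1/2) : ℝ)) * Real.exp (-(1/(8*t)) * ‖z‖^2)

lemma hkK_cont (N : ℕ) (t : ℝ) : Continuous (hkK N t) := by
  unfold hkK; fun_prop

lemma hkK_nonneg (N : ℕ) {t : ℝ} (ht : 0 < t) (z : Euc N) : 0 ≤ hkK N t z := by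
  unfold hkK; have := Real.pi_pos; positivity

lemma hk_cont (N : ℕ) (t : ℝ) : Continuous (fun x => heatKernel N x t) := by
  unfold heatKernel; fun_prop

lemma hk_grad (N : ℕ) {t : ℝ} (ht : 0 < t) (z y : Euc N) :
    |heatKernel N z t * (inner ℝ z y / (2 * t))| ≤ ‖y‖ * hkK N t z := by
  have hpi := Real.pi_pos
  have hc : 0 ≤ (4 * π * t) ^ (-(N : ℝ) / 2) := by positivity
  rw [heatKernel, hkK, abs_mul, abs_mul, abs_of_nonneg hc, abs_of_pos (Real.exp_pos _), abs_div,
    abs_of_pos (by positivity : 0 < 2 * t)]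
  have hs : 0 < √t := Real.sqrt_pos.2 ht
  have hss : √t ^ 2 = t := Real.sq_sqrt ht.le
  have htt : t ^ (-(1/2) : ℝ) = 1 / √t := by
    rw [Real.rpow_neg ht.le, ← Real.sqrt_eq_rpow, one_div]
  have h := hk_u (‖z‖ / (2 * √t))
  have e1 : -(‖z‖ / (2 * √t))^2 = -‖z‖^2/(4*t) := by
    rw [div_pow, mul_pow, hss]; ring
  have e2 : -((‖z‖ / (2 * √t))^2/2) = -(1/(8*t)) * ‖z‖^2 := by
    rw [div_pow, mul_pow, hss]; field_simp; ring
  rw [e1, e2] at h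
  have hi : |inner ℝ z y| ≤ ‖z‖ * ‖y‖ := abs_real_inner_le_norm z y
  rw [htt]
  calc (4 * π * t) ^ (-(N : ℝ) / 2) * Real.exp (-‖z‖^2/(4*t)) * (|inner ℝ z y| / (2*t))
      ≤ (4 * π * t) ^ (-(N : ℝ) / 2) * Real.exp (-‖z‖^2/(4*t)) * ((‖z‖ * ‖y‖) / (2*t)) := by gcongr
    _ = (4 * π * t) ^ (-(N : ℝ) / 2) * (‖y‖ * (1/√t)) * (‖z‖ / (2 * √t) * Real.exp (-‖z‖^2/(4*t))) := by
        have : (‖z‖ * ‖y‖) / (2*t) = ‖y‖ * (1/√t) * (‖z‖ / (2 * √t)) := by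
          nth_rw 1 [← hss]; field_simp
        rw [this]; ring
    _ ≤ (4 * π * t) ^ (-(N : ℝ) / 2) * (‖y‖ * (1/√t)) * Real.exp (-(1/(8*t)) * ‖z‖^2) := by gcongr
    _ = _ := by ring

lemma hk_deriv (N : ℕ) {t : ℝ} (ht : 0 < t) (x y : Euc N) (s : ℝ) :
    HasDerivAt (fun s : ℝ => heatKernel N (x - s • y) t)
      (heatKernel N (x - s • y) t * (inner ℝ (x - s • y) y / (2 * t))) s := by
  unfold heatKernel
  have h1 : HasDerivAt (fun s : ℝ => x - s • y) (-y) s := by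
    simpa using ((hasDerivAt_id s).smul_const y).const_sub x
  have h2 := h1.norm_sq
  have h3 := ((h2.neg.div_const (4*t)).exp).const_mul ((4 * π * t) ^ (-(N : ℝ) / 2))
  refine h3.congr_deriv ?_
  rw [inner_neg_right]
  simp only [Pi.neg_apply]
  field_simp
  ring

/-- averaged kernel -/
def hkH (N : ℕ) (t : ℝ) (x y : Euc N) : ℝ≥0∞ :=
  ∫⁻ s in Set.Ioc (0:ℝ) 1, ENNReal.ofReal (hkK N t (x - s • y))

lemma hkH_meas (N : ℕ) (t : ℝ) : Measurable (fun q : Euc N × Euc N => hkH N t q.1 q.2) := by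
  unfold hkH
  refine Measurable.lintegral_prod_right'
    (f := fun r : (Euc N × Euc N) × ℝ => ENNReal.ofReal (hkK N t (r.1.1 - r.2 • r.1.2))) ?_
  have := hkK_cont N t
  refine ENNReal.measurable_ofReal.comp (Continuous.measurable ?_)
  fun_prop

lemma hk_diff (N : ℕ) {t : ℝ} (ht : 0 < t) (x y : Euc N) :
    ‖heatKernel N (x - y) t - heatKernel N x t‖ₑ ≤ hkH N t x y * ‖y‖ₑ := by
  have hK := hk_cont N t
  have hcont : Continuous (fun s : ℝ =>
      heatKernel N (x - s • y) t * (inner ℝ (x - s • y) y / (2 * t))) := by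
    have : Continuous (fun s : ℝ => heatKernel N (x - s • y) t) :=
      hK.comp (by fun_prop : Continuous fun s : ℝ => x - s • y)
    fun_prop
  have h := intervalIntegral.integral_eq_sub_of_hasDerivAt (a := 0) (b := 1)
    (fun s _ => hk_deriv N ht x y s) (hcont.intervalIntegrable _ _)
  simp only [one_smul, zero_smul, sub_zero] at h
  rw [← h, intervalIntegral.integral_of_le zero_le_one, hkH,
    ← lintegral_mul_const' _ _ (by simp)]
  refine (enorm_integral_le_lintegral_enorm _).trans (lintegral_mono fun s => ?_)
  rw [Real.enorm_eq_ofReal_abs, ← ofReal_norm, ← ENNReal.ofReal_mul (hkK_nonneg N ht _)]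
  refine ENNReal.ofReal_le_ofReal ?_
  rw [mul_comm (hkK _ _ _)]
  exact hk_grad N ht _ y

lemma hkH_le (N : ℕ) {t : ℝ} (ht : 0 < t) (x y : Euc N) :
    hkH N t x y ≤ ENNReal.ofReal ((4 * π * t) ^ (-(N : ℝ) / 2) * t ^ (-(1/2) : ℝ)) := by
  unfold hkH
  have hpi := Real.pi_pos
  calc _ ≤ ∫⁻ s in Set.Ioc (0:ℝ) 1,
        ENNReal.ofReal ((4 * π * t) ^ (-(N : ℝ) / 2) * t ^ (-(1/2) : ℝ)) := by
        refine lintegral_mono fun s => ENNReal.ofReal_le_ofReal ?_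
        unfold hkK
        refine mul_le_of_le_one_right (by positivity) (Real.exp_le_one_iff.2 ?_)
        rw [neg_mul]
        exact neg_nonpos.2 (by positivity)
    _ = _ := by simp

lemma hkK_lint (N : ℕ) {t : ℝ} (ht : 0 < t) :
    ∫⁻ z, ENNReal.ofReal (hkK N t z) =
      ENNReal.ofReal (t ^ (-(1/2) : ℝ) * 2 ^ ((N:ℝ)/2)) := by
  have hpi := Real.pi_pos
  have hb : 0 < 1/(8*t) := by positivity
  have hI := GaussianFourier.integral_rexp_neg_mul_sq_norm (V := Euc N) hb
  have hint : Integrable (fun z : Euc N => Real.exp (-(1/(8*t)) * ‖z‖^2)) := by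
    by_contra hcon
    rw [integral_undef hcon] at hI
    have : 0 < (π / (1/(8*t))) ^ ((Module.finrank ℝ (Euc N) : ℝ)/2) := by positivity
    linarith
  rw [← ofReal_integral_eq_lintegral_ofReal]
  · congr 1
    unfold hkK
    rw [integral_const_mul, hI, finrank_euclideanSpace_fin]
    have : π / (1/(8*t)) = 2 * (4 * π * t) := by field_simp; ring
    have hc : 0 < 4 * π * t := by positivity
    rw [this]
    generalize 4 * π * t = c at hc
    have h2 : (2 * c) ^ ((N:ℝ)/2) = 2 ^ ((N:ℝ)/2) * c ^ ((N:ℝ)/2) :=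
      Real.mul_rpow (by norm_num) hc.le
    have h3 : c ^ (-(N:ℝ)/2) * c ^ ((N:ℝ)/2) = 1 := by
      rw [← Real.rpow_add hc, neg_div, neg_add_cancel, Real.rpow_zero]
    rw [h2]
    linear_combination (t ^ (-(1/2) : ℝ) * 2 ^ ((N:ℝ)/2)) * h3
  · exact hint.const_mul _
  · exact Filter.Eventually.of_forall fun z => hkK_nonneg N ht z

lemma hkH_lint (N : ℕ) {t : ℝ} (ht : 0 < t) (y : Euc N) :
    ∫⁻ x, hkH N t x y = ENNReal.ofReal (t ^ (-(1/2) : ℝ) * 2 ^ ((N:ℝ)/2)) := by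
  unfold hkH
  rw [lintegral_lintegral_swap]
  · have : ∀ s : ℝ, ∫⁻ x : Euc N, ENNReal.ofReal (hkK N t (x - s • y)) =
        ENNReal.ofReal (t ^ (-(1/2) : ℝ) * 2 ^ ((N:ℝ)/2)) := fun s => by
      rw [lintegral_sub_right_eq_self (fun x => ENNReal.ofReal (hkK N t x)), hkK_lint N ht]
    simp_rw [this]
    simp
  · have := hkK_cont N t
    refine (ENNReal.measurable_ofReal.comp (Continuous.measurable ?_)).aemeasurable
    fun_prop

lemma hk_interp {α : Type*} [MeasurableSpace α] {μ : Measure α} (f : α → ℝ) (p : ℝ≥0∞)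
    (hp : 1 ≤ p) (A B : ℝ) (hA : 0 ≤ A) (hB : 0 ≤ B) (h1 : ∀ x, ‖f x‖ₑ ≤ ENNReal.ofReal A)
    (h2 : ∫⁻ x, ‖f x‖ₑ ∂μ ≤ ENNReal.ofReal B) :
    eLpNorm f p μ ≤ ENNReal.ofReal (A ^ (1 - 1/p.toReal) * B ^ (1/p.toReal)) := by
  rcases eq_or_ne p ⊤ with rfl | hpt
  · simp only [ENNReal.toReal_top, div_zero, sub_zero, Real.rpow_one, Real.rpow_zero, mul_one]
    rw [eLpNorm_exponent_top]
    exact eLpNormEssSup_le_of_ae_enorm_bound (Filter.Eventually.of_forall h1)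
  have hp0 : p ≠ 0 := by rintro rfl; simp at hp
  have hr : 1 ≤ p.toReal := by simpa using ENNReal.toReal_mono hpt hp
  set r := p.toReal
  have hr0 : 0 < r := by linarith
  rw [eLpNorm_eq_lintegral_rpow_enorm_toReal hp0 hpt]
  have key : ∫⁻ x, ‖f x‖ₑ ^ r ∂μ ≤ ENNReal.ofReal (A ^ (r-1) * B) := by
    calc ∫⁻ x, ‖f x‖ₑ ^ r ∂μ ≤ ∫⁻ x, ENNReal.ofReal (A ^ (r-1)) * ‖f x‖ₑ ∂μ := by
          refine lintegral_mono fun x => ?_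
          have : ‖f x‖ₑ ^ r = ‖f x‖ₑ ^ (r-1) * ‖f x‖ₑ := by
            conv_lhs => rw [show r = (r - 1) + 1 by ring]
            rw [ENNReal.rpow_add_of_nonneg _ _ (by linarith) zero_le_one, ENNReal.rpow_one]
          rw [this, ← ENNReal.ofReal_rpow_of_nonneg hA (by linarith)]
          exact mul_le_mul_left (ENNReal.rpow_le_rpow (h1 x) (by linarith)) _
      _ = ENNReal.ofReal (A ^ (r-1)) * ∫⁻ x, ‖f x‖ₑ ∂μ := lintegral_const_mul' _ _ (by simp)
      _ ≤ _ := by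
          rw [ENNReal.ofReal_mul (by positivity)]
          gcongr
  calc _ ≤ (ENNReal.ofReal (A ^ (r-1) * B)) ^ (1/r) := by gcongr
    _ = _ := by
      rw [ENNReal.ofReal_rpow_of_nonneg (by positivity) (by positivity),
        Real.mul_rpow (by positivity) hB, ← Real.rpow_mul hA]
      congr 4
      field_simp

theorem stmt2 (N : ℕ) (hN : 1 ≤ N) (p : ℝ≥0∞) (hp : 1 ≤ p) :
    ∃ C : ℝ, 0 < C ∧
      ∀ (φ : Euc N → ℝ) (M : ℝ), Integrable φ → Integrable (fun x => ‖x‖ * |φ x|) →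
        (∫ x, φ x) = M →
        ∀ t : ℝ, 0 < t →
          eLpNorm
              (fun x => (∫ y, heatKernel N (x - y) t * φ y) - M * heatKernel N x t)
              p volume ≤
            ENNReal.ofReal
              (C * t ^ (-((N : ℝ) / 2) * (1 - 1 / p.toReal) - 1 / 2) *
                ∫ x, ‖x‖ * |φ x|) := by
  have hpi := Real.pi_pos
  refine ⟨(4 * π) ^ (-((N : ℝ) / 2) * (1 - 1 / p.toReal)) * 2 ^ ((N:ℝ)/2 * (1 / p.toReal)),
    by positivity, ?_⟩
  intro φ M hφ hxφ hM t ht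
  set m := ∫ x, ‖x‖ * |φ x| with hm
  have hm0 : 0 ≤ m := integral_nonneg fun x => by positivity
  set A := (4 * π * t) ^ (-(N : ℝ) / 2) * t ^ (-(1/2) : ℝ) with hA
  set B := t ^ (-(1/2) : ℝ) * 2 ^ ((N:ℝ)/2) with hB
  have hA0 : 0 ≤ A := by positivity
  have hB0 : 0 ≤ B := by positivity
  have hw : ∫⁻ y, ENNReal.ofReal (‖y‖ * |φ y|) = ENNReal.ofReal m :=
    (ofReal_integral_eq_lintegral_ofReal hxφ (Filter.Eventually.of_forall fun y => by positivity)).symm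
  have hwm : AEMeasurable (fun y => ENNReal.ofReal (‖y‖ * |φ y|)) :=
    hxφ.aestronglyMeasurable.aemeasurable.ennreal_ofReal
  have hbound : ∀ x, ‖(∫ y, heatKernel N (x - y) t * φ y) - M * heatKernel N x t‖ₑ ≤
      ∫⁻ y, hkH N t x y * ENNReal.ofReal (‖y‖ * |φ y|) := by
    intro x
    have hi1 : Integrable (fun y => heatKernel N (x - y) t * φ y) := by
      refine hφ.bdd_mul (c := (4 * π * t) ^ (-(N : ℝ) / 2)) ?_ ?_
      · exact ((hk_cont N t).comp (by fun_prop : Continuous fun y => x - y)).aestronglyMeasurable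
      · refine Filter.Eventually.of_forall fun y => ?_
        unfold heatKernel
        rw [Real.norm_of_nonneg (by positivity)]
        refine mul_le_of_le_one_right (by positivity) (Real.exp_le_one_iff.2 ?_)
        rw [neg_div]
        exact neg_nonpos.2 (by positivity)
    rw [← hM, mul_comm, ← integral_const_mul, ← integral_sub hi1 (hφ.const_mul _)]
    refine (enorm_integral_le_lintegral_enorm _).trans (lintegral_mono fun y => ?_)
    simp only []
    rw [← sub_mul, enorm_mul, ENNReal.ofReal_mul (norm_nonneg _), ofReal_norm,
      ← Real.enorm_eq_ofReal_abs, ← mul_assoc]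
    gcongr
    exact hk_diff N ht x y
  refine (hk_interp _ p hp (A * m) (B * m) (by positivity) (by positivity) ?_ ?_).trans ?_
  · intro x
    refine (hbound x).trans ?_
    calc _ ≤ ∫⁻ y, ENNReal.ofReal A * ENNReal.ofReal (‖y‖ * |φ y|) := by
          refine lintegral_mono fun y => ?_
          gcongr
          exact hkH_le N ht x y
      _ = _ := by rw [lintegral_const_mul' _ _ (by simp), hw, ENNReal.ofReal_mul hA0]
  · refine (lintegral_mono hbound).trans ?_
    rw [lintegral_lintegral_swap]
    · have : ∀ y : Euc N, ∫⁻ x, hkH N t x y * ENNReal.ofReal (‖y‖ * |φ y|) =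
          ENNReal.ofReal B * ENNReal.ofReal (‖y‖ * |φ y|) := fun y => by
        rw [lintegral_mul_const' _ _ ENNReal.ofReal_ne_top, hkH_lint N ht y]
      simp_rw [this]
      rw [lintegral_const_mul' _ _ (by simp), hw, ENNReal.ofReal_mul hB0]
    · exact (hkH_meas N t).aemeasurable.mul hwm.comp_snd
  · refine ENNReal.ofReal_le_ofReal (le_of_eq ?_)
    set q := 1 / p.toReal
    have e1 : (A * m) ^ (1 - q) = (4 * π) ^ (-((N : ℝ) / 2) * (1 - q)) *
        t ^ (-(N : ℝ) / 2 * (1 - q)) * t ^ (-(1/2) * (1 - q)) * m ^ (1 - q) := by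
      rw [Real.mul_rpow hA0 hm0, hA, Real.mul_rpow (by positivity) (by positivity),
        ← Real.rpow_mul (by positivity), ← Real.rpow_mul ht.le,
        Real.mul_rpow (by positivity) ht.le, neg_div]
    have e2 : (B * m) ^ q = t ^ (-(1/2) * q) * 2 ^ ((N:ℝ)/2 * q) * m ^ q := by
      rw [Real.mul_rpow hB0 hm0, hB, Real.mul_rpow (by positivity) (by positivity),
        ← Real.rpow_mul ht.le, ← Real.rpow_mul (by norm_num)]
    have hmm : m ^ (1 - q) * m ^ q = m := by
      rcases hm0.eq_or_lt with h | h
      · rw [← h]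
        rcases eq_or_ne q 0 with h0 | h0
        · simp [h0]
        · simp [Real.zero_rpow h0]
      · rw [← Real.rpow_add h]; simp
    have htt : t ^ (-((N : ℝ) / 2) * (1 - q) - 1 / 2) =
        t ^ (-(N : ℝ) / 2 * (1 - q)) * t ^ (-(1/2) * (1 - q)) * t ^ (-(1/2) * q) := by
      rw [← Real.rpow_add ht, ← Real.rpow_add ht]; congr 1; ring
    rw [htt, e1, e2]
    linear_combination ((4 * π) ^ (-((N : ℝ) / 2) * (1 - q)) *
        t ^ (-(N : ℝ) / 2 * (1 - q)) * t ^ (-(1/2) * (1 - q)) *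
        t ^ (-(1/2) * q) * 2 ^ ((N:ℝ)/2 * q)) * hmm
end
end

section
/- For every M ∈ ℝ, the function f_M : ℝ → ℝ defined by f_M(x) = (e^M − 1)h(x) / ((e^M − 1)∫_{−∞}^x h(s) ds + 1), where h(x) = (4π)^{−1/2} exp(−x²/4), is smooth and satisfies the ordinary differential equation −f_M''(x) − x·f_M'(x)/2 − f_M(x)/2 = (f_M²)'(x) for all x ∈ ℝ, together with ∫_ℝ f_M(x) dx = M. -/
open MeasureTheory Real Filter Topology

noncomputable section

/-- The Gaussian profile `h(x) = (4π)^{-1/2} exp(-x²/4)`. -/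
def gauss (x : ℝ) : ℝ := (4 * π) ^ (-(1 : ℝ) / 2) * Real.exp (-x ^ 2 / 4)

/-- The self-similar profile of mass `M` of the viscous Burgers equation:
`f_M(x) = (e^M - 1) h(x) / ((e^M - 1) ∫_{-∞}^x h + 1)`. -/
def fM (M x : ℝ) : ℝ :=
  (Real.exp M - 1) * gauss x / ((Real.exp M - 1) * (∫ s in Set.Iic x, gauss s) + 1)

theorem gauss_eq (x : ℝ) : gauss x = (4 * π) ^ (-(1 : ℝ) / 2) * Real.exp (-(1 / 4) * x ^ 2) := by
  unfold gauss
  congr 2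
  ring

theorem gauss_nonneg (x : ℝ) : 0 ≤ gauss x := by
  unfold gauss
  positivity

theorem gauss_contDiff : ContDiff ℝ (⊤ : ℕ∞) gauss := by
  unfold gauss
  fun_prop

theorem gauss_integrable : Integrable gauss := by
  have h := (integrable_exp_neg_mul_sq (b := 1 / 4) (by norm_num)).const_mul
    ((4 * π) ^ (-(1 : ℝ) / 2))
  exact h.congr (Eventually.of_forall fun x => (gauss_eq x).symm)

theorem gauss_integral : (∫ x, gauss x) = 1 := by
  simp_rw [gauss_eq]
  rw [integral_const_mul, integral_gaussian, Real.sqrt_eq_rpow]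
  have h : π / (1 / 4) = 4 * π := by ring
  rw [h, ← Real.rpow_add (by positivity)]
  norm_num

theorem gauss_hasDerivAt (x : ℝ) : HasDerivAt gauss (-x / 2 * gauss x) x := by
  unfold gauss
  have h : HasDerivAt (fun x : ℝ => -x ^ 2 / 4) (-x / 2) x := by
    refine (((hasDerivAt_pow 2 x).neg).div_const 4).congr_deriv ?_
    norm_num
    ring
  refine (h.exp.const_mul ((4 * π) ^ (-(1 : ℝ) / 2))).congr_deriv ?_
  ring

def cdfG (x : ℝ) : ℝ := ∫ s in Set.Iic x, gauss s

theorem cdfG_hasDerivAt (x : ℝ) : HasDerivAt cdfG (gauss x) x := by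
  have e : cdfG = fun y => cdfG 0 + ∫ s in (0 : ℝ)..y, gauss s := by
    funext y
    have := intervalIntegral.integral_Iic_sub_Iic (a := 0) (b := y)
      gauss_integrable.integrableOn gauss_integrable.integrableOn
    unfold cdfG
    linarith
  rw [e]
  exact (intervalIntegral.integral_hasDerivAt_right
    gauss_integrable.intervalIntegrable
    (gauss_contDiff.continuous.stronglyMeasurableAtFilter _ _)
    gauss_contDiff.continuous.continuousAt).const_add _

theorem cdfG_nonneg (x : ℝ) : 0 ≤ cdfG x :=
  integral_nonneg fun s => gauss_nonneg s

theorem cdfG_le_one (x : ℝ) : cdfG x ≤ 1 := by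
  rw [← gauss_integral]
  exact setIntegral_le_integral gauss_integrable (Eventually.of_forall gauss_nonneg)

theorem cdfG_contDiff : ContDiff ℝ (⊤ : ℕ∞) cdfG := by
  rw [contDiff_infty_iff_deriv]
  refine ⟨fun x => (cdfG_hasDerivAt x).differentiableAt, ?_⟩
  have : deriv cdfG = gauss := funext fun x => (cdfG_hasDerivAt x).deriv
  rw [this]
  exact gauss_contDiff

theorem cdfG_tendsto_top : Tendsto cdfG atTop (𝓝 1) := by
  rw [← gauss_integral]
  exact (aecover_Iic tendsto_id).integral_tendsto_of_countably_generated gauss_integrable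

theorem cdfG_tendsto_bot : Tendsto cdfG atBot (𝓝 0) := by
  have h1 : Tendsto (fun x => ∫ s in Set.Ioi x, gauss s) atBot (𝓝 1) := by
    rw [← gauss_integral]
    exact (aecover_Ioi tendsto_id).integral_tendsto_of_countably_generated gauss_integrable
  have e : cdfG = fun x => 1 - ∫ s in Set.Ioi x, gauss s := by
    funext x
    have := intervalIntegral.integral_Iic_add_Ioi (b := x)
      gauss_integrable.integrableOn gauss_integrable.integrableOn
    rw [gauss_integral] at this
    unfold cdfG
    linarith
  rw [e]
  simpa using h1.const_sub 1

def denG (M x : ℝ) : ℝ := (Real.exp M - 1) * cdfG x + 1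

theorem denG_ge (M x : ℝ) : min 1 (Real.exp M) ≤ denG M x := by
  have h0 := cdfG_nonneg x
  have h1 := cdfG_le_one x
  unfold denG
  rcases le_total 1 (Real.exp M) with h | h
  · rw [min_eq_left h]
    nlinarith
  · rw [min_eq_right h]
    nlinarith

theorem min_exp_pos (M : ℝ) : 0 < min 1 (Real.exp M) := lt_min one_pos (Real.exp_pos M)

theorem denG_pos (M x : ℝ) : 0 < denG M x := (min_exp_pos M).trans_le (denG_ge M x)

theorem denG_hasDerivAt (M x : ℝ) : HasDerivAt (denG M) ((Real.exp M - 1) * gauss x) x :=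
  ((cdfG_hasDerivAt x).const_mul _).add_const _

theorem fM_eq (M : ℝ) : fM M = fun x => (Real.exp M - 1) * gauss x / denG M x := rfl

theorem fM_contDiff (M : ℝ) : ContDiff ℝ (⊤ : ℕ∞) (fM M) := by
  rw [fM_eq]
  refine (contDiff_const.mul gauss_contDiff).div ?_ fun x => (denG_pos M x).ne'
  exact (contDiff_const.mul cdfG_contDiff).add contDiff_const

theorem fM_hasDerivAt (M x : ℝ) : HasDerivAt (fM M) (-x / 2 * fM M x - fM M x ^ 2) x := by
  have hp := (denG_pos M x).ne'
  have := ((gauss_hasDerivAt x).const_mul (Real.exp M - 1)).div (denG_hasDerivAt M x) hp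
  refine HasDerivAt.congr_deriv (f := fM M) this ?_
  rw [fM_eq]
  field_simp

theorem fM_integrable (M : ℝ) : Integrable (fM M) := by
  refine (gauss_integrable.const_mul (|Real.exp M - 1| / min 1 (Real.exp M))).mono'
    (fM_contDiff M).continuous.aestronglyMeasurable (Eventually.of_forall fun x => ?_)
  rw [fM_eq]
  simp only [Real.norm_eq_abs]
  rw [abs_div, abs_mul, abs_of_nonneg (gauss_nonneg x), abs_of_pos (denG_pos M x), div_mul_eq_mul_div]
  have := gauss_nonneg x
  exact div_le_div_of_nonneg_left (by positivity) (min_exp_pos M) (denG_ge M x)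

theorem fM_integral (M : ℝ) : (∫ x, fM M x) = M := by
  have hb : Tendsto (fun x => Real.log (denG M x)) atBot (𝓝 0) := by
    have h : Tendsto (denG M) atBot (𝓝 1) := by
      unfold denG
      simpa using (cdfG_tendsto_bot.const_mul (Real.exp M - 1)).add_const 1
    simpa using h.log one_ne_zero
  have ht : Tendsto (fun x => Real.log (denG M x)) atTop (𝓝 M) := by
    have h : Tendsto (denG M) atTop (𝓝 (Real.exp M)) := by
      unfold denG
      simpa using (cdfG_tendsto_top.const_mul (Real.exp M - 1)).add_const 1
    simpa using h.log (Real.exp_pos M).ne'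
  have := integral_of_hasDerivAt_of_tendsto
    (fun x => (denG_hasDerivAt M x).log (denG_pos M x).ne') (fM_integrable M) hb ht
  rw [sub_zero] at this
  exact this

/-- For every `M ∈ ℝ`, the profile `f_M` is smooth, solves the
profile ODE `-f_M'' - x f_M'/2 - f_M/2 = (f_M²)'` on `ℝ`, and has total mass `M`. -/
theorem stmt4 (M : ℝ) :
    ContDiff ℝ (⊤ : ℕ∞) (fM M) ∧
      (∀ x : ℝ,
        -(deriv (deriv (fM M)) x) - x * deriv (fM M) x / 2 - fM M x / 2 =
          deriv (fun x' => fM M x' ^ 2) x) ∧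
      (∫ x, fM M x) = M := by
  refine ⟨fM_contDiff M, fun x => ?_, fM_integral M⟩
  have hd : deriv (fM M) = fun x => -x / 2 * fM M x - fM M x ^ 2 :=
    funext fun x => (fM_hasDerivAt M x).deriv
  have h2 : HasDerivAt (fun x' => fM M x' ^ 2) (2 * fM M x * deriv (fM M) x) x := by
    rw [hd]
    refine HasDerivAt.congr_deriv (f := fun x' => fM M x' ^ 2) ((fM_hasDerivAt M x).pow 2) ?_
    norm_num
  have h1 : HasDerivAt (fun x : ℝ => -x / 2) (-1 / 2) x := ((hasDerivAt_id x).neg).div_const 2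
  have h3 : HasDerivAt (deriv (fM M))
      (-1 / 2 * fM M x + -x / 2 * deriv (fM M) x - 2 * fM M x * deriv (fM M) x) x := by
    have := (h1.mul (fM_hasDerivAt M x).differentiableAt.hasDerivAt).sub h2
    rw [hd] at this ⊢
    exact this
  rw [h3.deriv, h2.deriv]
  ring
end
end
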